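/- arXiv:1903.05073 — 11 statements merged into one kernel-verified Lean document; each statement's English description precedes it below -/
import Mathlib

section
/- Let k ∈ ℝ, let I ⊆ ℝ be an interval containing 0, and let x, y, v : ℝ → ℝ be functions such that for all t ∈ I, x and y are differentiable at t with x'(t) = v(t)·(k·y(t) − 1) and y'(t) = −v(t)·k·x(t). Then the quantity k·(x(t)² + y(t)²)/2 − y(t) is conserved: for all t ∈ I, k·(x(t)² + y(t)²)/2 − y(t) = k·(x(0)² + y(0)²)/2 − y(0). -/
/-- Conservation of `k·(x² + y²)/2 − y` along the planar Dubins plant ODE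
`x' = v·(k·y − 1)`, `y' = −v·k·x` on an interval `I` containing `0`. -/
theorem dubins_annulus_quantity_conserved
    (k : ℝ) (I : Set ℝ) (hI : I.OrdConnected) (h0 : (0 : ℝ) ∈ I)
    (x y v : ℝ → ℝ)
    (hx : ∀ t ∈ I, HasDerivAt x (v t * (k * y t - 1)) t)
    (hy : ∀ t ∈ I, HasDerivAt y (-(v t) * k * x t) t) :
    ∀ t ∈ I, k * (x t ^ 2 + y t ^ 2) / 2 - y t
      = k * (x 0 ^ 2 + y 0 ^ 2) / 2 - y 0 := by
  intro t ht
  have hd : ∀ s ∈ I, HasDerivWithinAt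
      (fun s => k * (x s ^ 2 + y s ^ 2) / 2 - y s) 0 I s := by
    intro s hs
    have h := (((((hx s hs).pow 2).add ((hy s hs).pow 2)).const_mul k).div_const 2).sub (hy s hs)
    refine HasDerivAt.hasDerivWithinAt ?_
    refine HasDerivAt.congr_deriv (f := fun s => k * (x s ^ 2 + y s ^ 2) / 2 - y s) h ?_
    · norm_num
      ring
  have h := Convex.norm_image_sub_le_of_norm_hasDerivWithin_le (C := 0) hd
    (fun s _ => by simp) hI.convex h0 ht
  rw [zero_mul] at h
  exact sub_eq_zero.mp (norm_le_zero_iff.mp h)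
end

section
/- Let k ∈ ℝ with k ≠ 0, let I ⊆ ℝ be an interval containing 0, and let x, y, v : ℝ → ℝ satisfy, for all t ∈ I, x'(t) = v(t)·(k·y(t) − 1) and y'(t) = −v(t)·k·x(t). Then for all t ∈ I, x(t)² + (y(t) − 1/k)² = x(0)² + (y(0) − 1/k)², i.e., the trajectory stays on the circle of fixed radius centered at (0, 1/k). -/
/-- Along the planar Dubins plant ODE `x' = v·(k·y − 1)`, `y' = −v·k·x` with
curvature `k ≠ 0`, the trajectory stays on the circle of fixed radius centered
at `(0, 1/k)`. -/
theorem dubins_stays_on_circle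
    (k : ℝ) (hk : k ≠ 0) (I : Set ℝ) (hI : I.OrdConnected) (h0 : (0 : ℝ) ∈ I)
    (x y v : ℝ → ℝ)
    (hx : ∀ t ∈ I, HasDerivAt x (v t * (k * y t - 1)) t)
    (hy : ∀ t ∈ I, HasDerivAt y (-(v t) * k * x t) t) :
    ∀ t ∈ I, x t ^ 2 + (y t - 1 / k) ^ 2 = x 0 ^ 2 + (y 0 - 1 / k) ^ 2 := by
  intro t ht
  have hd : ∀ s ∈ I, HasDerivAt (fun s => x s ^ 2 + (y s - 1 / k) ^ 2) 0 s := by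
    intro s hs
    have h := ((hx s hs).pow 2).add (((hy s hs).sub_const (1 / k)).pow 2)
    refine h.congr_deriv ?_
    push_cast
    field_simp
    ring
  have hb := hI.convex.norm_image_sub_le_of_norm_hasDerivWithin_le (C := 0)
    (fun s hs => (hd s hs).hasDerivWithinAt) (fun s _ => by simp) h0 ht
  rw [zero_mul, norm_le_zero_iff, sub_eq_zero] at hb
  exact hb
end

section
/- Let k, ε ∈ ℝ, let I ⊆ ℝ be an interval containing 0, and let x, y, v : ℝ → ℝ satisfy, for all t ∈ I, x'(t) = v(t)·(k·y(t) − 1) and y'(t) = −v(t)·k·x(t). If |k·(x(0)² + y(0)² − ε²)/2 − y(0)| < ε, then for all t ∈ I, |k·(x(t)² + y(t)² − ε²)/2 − y(t)| < ε; i.e., the annulus condition is a differential invariant of the plant. -/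
/-- The annulus condition `|k·(x² + y² − ε²)/2 − y| < ε` is a differential
invariant of the planar Dubins plant ODE `x' = v·(k·y − 1)`, `y' = −v·k·x`. -/
theorem dubins_annulus_invariant
    (k ε : ℝ) (I : Set ℝ) (hI : I.OrdConnected) (h0 : (0 : ℝ) ∈ I)
    (x y v : ℝ → ℝ)
    (hx : ∀ t ∈ I, HasDerivAt x (v t * (k * y t - 1)) t)
    (hy : ∀ t ∈ I, HasDerivAt y (-(v t) * k * x t) t)
    (hinit : |k * (x 0 ^ 2 + y 0 ^ 2 - ε ^ 2) / 2 - y 0| < ε) :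
    ∀ t ∈ I, |k * (x t ^ 2 + y t ^ 2 - ε ^ 2) / 2 - y t| < ε := by
  intro t ht
  have hd : ∀ s ∈ I, HasDerivWithinAt
      (fun s => k * (x s ^ 2 + y s ^ 2 - ε ^ 2) / 2 - y s) 0 I s := by
    intro s hs
    have h := ((((((hx s hs).pow 2).add ((hy s hs).pow 2)).sub_const (ε ^ 2)).const_mul
      k).div_const 2).sub (hy s hs)
    refine (h.congr_deriv ?_).hasDerivWithinAt
    push_cast
    ring
  have hc := Convex.norm_image_sub_le_of_norm_hasDerivWithin_le (C := 0) hd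
    (by simp) hI.convex h0 ht
  simp only [zero_mul, norm_le_zero_iff, sub_eq_zero] at hc
  rw [hc]
  exact hinit
end

section
/- Let k ∈ ℝ, τ ≥ 0, and let x, y, v : ℝ → ℝ satisfy, for all t ∈ [0, τ], x'(t) = v(t)·(k·y(t) − 1) and y'(t) = −v(t)·k·x(t). Suppose there are constants v̄ > 0 and δ > 0 such that v(t) ≥ v̄ and x(t) ≥ δ for all t ∈ [0, τ]. Then x(τ)² + y(τ)² ≤ x(0)² + y(0)² − 2·v̄·δ·τ; in particular the squared distance of the waypoint to the origin strictly decreases. -/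
/-- Along the planar Dubins plant ODE, if the speed is bounded below by
`v̄ > 0` and the waypoint's forward coordinate is bounded below by `δ > 0`
on `[0, τ]`, then the squared distance to the origin decreases by at least
`2·v̄·δ·τ`. -/
theorem dubins_sq_dist_progress
    (k τ : ℝ) (hτ : 0 ≤ τ)
    (x y v : ℝ → ℝ)
    (hx : ∀ t ∈ Set.Icc (0 : ℝ) τ, HasDerivAt x (v t * (k * y t - 1)) t)
    (hy : ∀ t ∈ Set.Icc (0 : ℝ) τ, HasDerivAt y (-(v t) * k * x t) t)
    (vbar δ : ℝ) (hvbar : 0 < vbar) (hδ : 0 < δ)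
    (hv : ∀ t ∈ Set.Icc (0 : ℝ) τ, vbar ≤ v t)
    (hxlb : ∀ t ∈ Set.Icc (0 : ℝ) τ, δ ≤ x t) :
    x τ ^ 2 + y τ ^ 2 ≤ x 0 ^ 2 + y 0 ^ 2 - 2 * vbar * δ * τ := by
  have hd : ∀ t ∈ Set.Icc (0 : ℝ) τ,
      HasDerivAt (fun s => x s ^ 2 + y s ^ 2) (-2 * (v t * x t)) t := by
    intro t ht
    have h := ((hx t ht).pow 2).add ((hy t ht).pow 2)
    refine h.congr_deriv ?_
    push_cast
    ring
  rcases hτ.eq_or_lt with h0 | hpos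
  · subst h0
    simp
  · obtain ⟨c, hc, hce⟩ := exists_hasDerivAt_eq_slope (fun s => x s ^ 2 + y s ^ 2)
      (fun t => -2 * (v t * x t)) hpos
      (fun t ht => (hd t ht).continuousAt.continuousWithinAt)
      (fun t ht => hd t (Set.Ioo_subset_Icc_self ht))
    have hc' := Set.Ioo_subset_Icc_self hc
    have hm : vbar * δ ≤ v c * x c :=
      mul_le_mul (hv c hc') (hxlb c hc') hδ.le (hvbar.le.trans (hv c hc'))
    rw [eq_div_iff (by linarith)] at hce
    have := mul_le_mul_of_nonneg_right hm hτ
    linarith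
end

section
/- Let k ≠ 0 and ε > 0 with |k|·ε ≤ 1, and let x, y ∈ ℝ. Then |k·(x² + y² − ε²)/2 − y| < ε if and only if |Real.sqrt(x² + (y − 1/k)²) − 1/|k|| < ε; i.e., the annulus condition holds exactly when the circle about (0, 1/k) through (x, y) has radius within ε of 1/|k|. -/
/-- For `k ≠ 0` and `0 < ε` with `|k|·ε ≤ 1`, the annulus condition
`|k·(x² + y² − ε²)/2 − y| < ε` holds iff the radius of the circle about
`(0, 1/k)` through `(x, y)` is within `ε` of `1/|k|`. -/
theorem annulus_iff_radius_close
    (k ε : ℝ) (hk : k ≠ 0) (hε : 0 < ε) (hkε : |k| * ε ≤ 1) (x y : ℝ) :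
    |k * (x ^ 2 + y ^ 2 - ε ^ 2) / 2 - y| < ε ↔
      |Real.sqrt (x ^ 2 + (y - 1 / k) ^ 2) - 1 / (|k|)| < ε := by
  have ha : 0 < |k| := abs_pos.mpr hk
  have hr : 0 < 1 / |k| := by positivity
  have hrε : ε ≤ 1 / |k| := by
    rw [le_div_iff₀ ha]; linarith
  have hr2 : (1 / |k|) ^ 2 = (1 / k) ^ 2 := by
    rw [div_pow, div_pow, sq_abs]
  have har : |k| * (1 / |k|) = 1 := by field_simp
  have hR0 := Real.sqrt_nonneg (x ^ 2 + (y - 1 / k) ^ 2)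
  have hR2 : Real.sqrt (x ^ 2 + (y - 1 / k) ^ 2) ^ 2 = x ^ 2 + (y - 1 / k) ^ 2 :=
    Real.sq_sqrt (by positivity)
  have key : k * (x ^ 2 + y ^ 2 - ε ^ 2) / 2 - y
      = k / 2 * (Real.sqrt (x ^ 2 + (y - 1 / k) ^ 2) ^ 2 - (1 / |k|) ^ 2 - ε ^ 2) := by
    rw [hR2, hr2]; field_simp; ring
  rw [key, abs_mul, abs_div, abs_two]
  generalize Real.sqrt (x ^ 2 + (y - 1 / k) ^ 2) = R at *
  generalize 1 / |k| = r at *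
  generalize |k| = a at *
  have h1 : a / 2 * |R ^ 2 - r ^ 2 - ε ^ 2| < ε ↔ |R ^ 2 - r ^ 2 - ε ^ 2| < 2 * ε * r := by
    have e : ε = a / 2 * (2 * ε * r) := by linear_combination (-ε) * har
    conv_lhs => rw [show (a / 2 * |R ^ 2 - r ^ 2 - ε ^ 2| < ε) ↔
      (a / 2 * |R ^ 2 - r ^ 2 - ε ^ 2| < a / 2 * (2 * ε * r)) by rw [← e]]
    exact mul_lt_mul_iff_right₀ (by positivity)
  rw [h1, abs_lt, abs_lt]
  constructor
  · rintro ⟨h2, h3⟩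
    have := lt_of_pow_lt_pow_left₀ 2 hR0 (show (r - ε) ^ 2 < R ^ 2 by linarith [sub_sq r ε])
    have := lt_of_pow_lt_pow_left₀ 2 (by positivity) (show R ^ 2 < (r + ε) ^ 2 by linarith [add_sq r ε])
    constructor <;> linarith
  · rintro ⟨h2, h3⟩
    have := pow_lt_pow_left₀ (show r - ε < R by linarith) (by linarith) two_ne_zero
    have := pow_lt_pow_left₀ (show R < r + ε by linarith) hR0 two_ne_zero
    constructor <;> nlinarith
end

section
/- Let k ≠ 0 and ε > 0 with |k|·ε ≤ 1, and let x, y ∈ ℝ satisfy |k·(x² + y² − ε²)/2 − y| < ε. Then there exists a point (x₁, y₁) ∈ ℝ² with x₁² + (y₁ − 1/k)² = x² + (y − 1/k)² and x₁² + y₁² < ε²; i.e., the circle centered at (0, 1/k) through (x, y) meets the open ball of radius ε around the origin. -/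
/-- If the annulus condition holds at `(x, y)`, then the circle centered at
`(0, 1/k)` through `(x, y)` meets the open ball of radius `ε` around the
origin. -/
theorem annulus_circle_meets_goal
    (k ε : ℝ) (hk : k ≠ 0) (hε : 0 < ε) (hkε : |k| * ε ≤ 1) (x y : ℝ)
    (hann : |k * (x ^ 2 + y ^ 2 - ε ^ 2) / 2 - y| < ε) :
    ∃ x₁ y₁ : ℝ, x₁ ^ 2 + (y₁ - 1 / k) ^ 2 = x ^ 2 + (y - 1 / k) ^ 2 ∧
      x₁ ^ 2 + y₁ ^ 2 < ε ^ 2 := by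
  obtain ⟨h1, h2⟩ := abs_lt.mp hann
  obtain ⟨r, hr0, hr⟩ : ∃ r : ℝ, 0 ≤ r ∧ r ^ 2 = x ^ 2 + (y - 1 / k) ^ 2 :=
    ⟨Real.sqrt (x ^ 2 + (y - 1 / k) ^ 2), Real.sqrt_nonneg _, Real.sq_sqrt (by positivity)⟩
  obtain ⟨c, hc⟩ : ∃ c : ℝ, c = 1 / k := ⟨_, rfl⟩
  have hkc : k * c = 1 := by rw [hc]; field_simp
  rw [← hc] at hr ⊢
  have key : k * (r ^ 2 - c ^ 2 - ε ^ 2) / 2 = k * (x ^ 2 + y ^ 2 - ε ^ 2) / 2 - y := by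
    rw [hr]; linear_combination (-y) * hkc
  rw [← key] at h1 h2
  rcases lt_or_gt_of_ne hk with hneg | hpos
  · rw [abs_of_neg hneg] at hkε
    have hcn : c < 0 := by
      by_contra h
      nlinarith
    have hce : ε ≤ -c := by nlinarith
    have e1 : r ^ 2 < (-c + ε) ^ 2 := by
      have := mul_lt_mul_of_neg_left h1 hcn
      have e : c * (k * (r ^ 2 - c ^ 2 - ε ^ 2) / 2) = (r ^ 2 - c ^ 2 - ε ^ 2) / 2 := by
        linear_combination ((r ^ 2 - c ^ 2 - ε ^ 2) / 2) * hkc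
      nlinarith
    have e2 : (-c - ε) ^ 2 < r ^ 2 := by
      have := mul_lt_mul_of_neg_left h2 hcn
      have e : c * (k * (r ^ 2 - c ^ 2 - ε ^ 2) / 2) = (r ^ 2 - c ^ 2 - ε ^ 2) / 2 := by
        linear_combination ((r ^ 2 - c ^ 2 - ε ^ 2) / 2) * hkc
      nlinarith
    have f1 : r < -c + ε := lt_of_pow_lt_pow_left₀ 2 (by linarith) e1
    have f2 : -c - ε < r := lt_of_pow_lt_pow_left₀ 2 hr0 e2
    exact ⟨0, c + r, by rw [← hr]; ring, by nlinarith⟩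
  · rw [abs_of_pos hpos] at hkε
    have hcn : 0 < c := by rw [hc]; positivity
    have hce : ε ≤ c := by nlinarith
    have e : c * (k * (r ^ 2 - c ^ 2 - ε ^ 2) / 2) = (r ^ 2 - c ^ 2 - ε ^ 2) / 2 := by
      linear_combination ((r ^ 2 - c ^ 2 - ε ^ 2) / 2) * hkc
    have e1 : r ^ 2 < (c + ε) ^ 2 := by
      have := mul_lt_mul_of_pos_left h2 hcn
      nlinarith
    have e2 : (c - ε) ^ 2 < r ^ 2 := by
      have := mul_lt_mul_of_pos_left h1 hcn
      nlinarith
    have f1 : r < c + ε := lt_of_pow_lt_pow_left₀ 2 (by linarith) e1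
    have f2 : c - ε < r := lt_of_pow_lt_pow_left₀ 2 hr0 e2
    exact ⟨0, c - r, by rw [← hr]; ring, by nlinarith⟩
end

section
/- Let k ≠ 0, ε > 0 with |k|·ε ≤ 1, and v̄ > 0. Let x, y : ℝ → ℝ satisfy, for all t ≥ 0, x'(t) = v̄·(k·y(t) − 1) and y'(t) = −v̄·k·x(t), and suppose |k·(x(0)² + y(0)² − ε²)/2 − y(0)| < ε. Then there exists t ∈ [0, 2π/(|k|·v̄)] with x(t)² + y(t)² < ε²; i.e., driving at constant speed v̄ along curvature k reaches the goal region of radius ε within one full rotation. -/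
/-- Liveness at constant speed: if the annulus condition holds initially, then
driving at constant speed `v̄ > 0` along curvature `k ≠ 0` reaches the goal
region of radius `ε` within one full rotation, i.e. by time `2π/(|k|·v̄)`. -/
theorem dubins_constant_speed_reaches_goal
    (k ε vbar : ℝ) (hk : k ≠ 0) (hε : 0 < ε) (hkε : |k| * ε ≤ 1)
    (hvbar : 0 < vbar)
    (x y : ℝ → ℝ)
    (hx : ∀ t : ℝ, 0 ≤ t → HasDerivAt x (vbar * (k * y t - 1)) t)
    (hy : ∀ t : ℝ, 0 ≤ t → HasDerivAt y (-vbar * k * x t) t)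
    (hann : |k * (x 0 ^ 2 + y 0 ^ 2 - ε ^ 2) / 2 - y 0| < ε) :
    ∃ t ∈ Set.Icc (0 : ℝ) (2 * Real.pi / (|k| * vbar)),
      x t ^ 2 + y t ^ 2 < ε ^ 2 := by
  have hkpos : 0 < |k| := abs_pos.mpr hk
  have hconst : ∀ f : ℝ → ℝ, (∀ t, 0 ≤ t → HasDerivAt f 0 t) → ∀ t, 0 ≤ t → f t = f 0 := by
    intro f hf t ht
    refine constant_of_has_deriv_right_zero (a := 0) (b := t)
      (fun s hs => (hf s hs.1).continuousAt.continuousWithinAt)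
      (fun s hs => (hf s hs.1).hasDerivWithinAt) t ⟨ht, le_refl t⟩
  have hc : ∀ t : ℝ, HasDerivAt (fun s => Real.cos (k * vbar * s))
      (-Real.sin (k * vbar * t) * (k * vbar)) t := by
    intro t
    have := ((hasDerivAt_id t).const_mul (k * vbar)).cos
    simpa using this
  have hs : ∀ t : ℝ, HasDerivAt (fun s => Real.sin (k * vbar * s))
      (Real.cos (k * vbar * t) * (k * vbar)) t := by
    intro t
    have := ((hasDerivAt_id t).const_mul (k * vbar)).sin
    simpa using this
  have hA := hconst (fun t => k * x t * Real.cos (k * vbar * t)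
      - (k * y t - 1) * Real.sin (k * vbar * t)) (by
    intro t ht
    have := (((hx t ht).const_mul k).mul (hc t)).sub
      ((((hy t ht).const_mul k).sub_const 1).mul (hs t))
    refine this.congr_deriv ?_
    ring)
  have hB := hconst (fun t => k * x t * Real.sin (k * vbar * t)
      + (k * y t - 1) * Real.cos (k * vbar * t)) (by
    intro t ht
    have := (((hx t ht).const_mul k).mul (hs t)).add
      ((((hy t ht).const_mul k).sub_const 1).mul (hc t))
    refine this.congr_deriv ?_
    ring)
  simp only [mul_zero, Real.cos_zero, Real.sin_zero, mul_one, sub_zero, zero_add] at hA hB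
  obtain ⟨R, φ, hR, hφ1, hφ2, hw0, hu0⟩ : ∃ R φ : ℝ, 0 ≤ R ∧ -Real.pi ≤ φ ∧ φ ≤ Real.pi ∧
      R * Real.cos φ = k * y 0 - 1 ∧ R * Real.sin φ = k * x 0 :=
    ⟨‖(⟨k * y 0 - 1, k * x 0⟩ : ℂ)‖, Complex.arg ⟨k * y 0 - 1, k * x 0⟩, norm_nonneg _,
      (Complex.neg_pi_lt_arg _).le, Complex.arg_le_pi _,
      Complex.norm_mul_cos_arg _, Complex.norm_mul_sin_arg _⟩
  obtain ⟨t, ht0, ht1, hsin, hcos⟩ : ∃ t : ℝ, 0 ≤ t ∧ t ≤ 2 * Real.pi / (|k| * vbar) ∧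
      Real.sin (k * vbar * t) = Real.sin φ ∧ Real.cos (k * vbar * t) = - Real.cos φ := by
    rcases lt_or_gt_of_ne hk with h | h
    · have hp : 0 < -k * vbar := mul_pos (by linarith) hvbar
      have e : k * vbar * ((Real.pi + φ) / (-k * vbar)) = -(φ + Real.pi) := by
        field_simp
        ring
      refine ⟨(Real.pi + φ) / (-k * vbar), div_nonneg (by linarith) hp.le, ?_, ?_, ?_⟩
      · rw [abs_of_neg h]
        exact div_le_div_of_nonneg_right (by linarith) hp.le
      · rw [e, Real.sin_neg, Real.sin_add_pi, neg_neg]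
      · rw [e, Real.cos_neg, Real.cos_add_pi]
    · have hp : 0 < k * vbar := mul_pos h hvbar
      have e : k * vbar * ((Real.pi - φ) / (k * vbar)) = Real.pi - φ := by
        field_simp
      refine ⟨(Real.pi - φ) / (k * vbar), div_nonneg (by linarith) hp.le, ?_, ?_, ?_⟩
      · rw [abs_of_pos h]
        exact div_le_div_of_nonneg_right (by linarith) hp.le
      · rw [e, Real.sin_pi_sub]
      · rw [e, Real.cos_pi_sub]
  refine ⟨t, ⟨ht0, ht1⟩, ?_⟩
  have hA := hA t ht0
  have hB := hB t ht0
  rw [hsin, hcos, ← hu0] at hA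
  rw [hsin, hcos, ← hw0] at hB
  have h1 := Real.sin_sq_add_cos_sq φ
  have hu : k * x t = 0 := by
    linear_combination (-Real.cos φ) * hA + Real.sin φ * hB - k * x t * h1
  have hw : k * y t - 1 = -R := by
    linear_combination (-Real.sin φ) * hA - Real.cos φ * hB - (k * y t - 1 + R) * h1
  have hRR : R ^ 2 = (k * x 0) ^ 2 + (k * y 0 - 1) ^ 2 := by
    rw [← hu0, ← hw0]; linear_combination (-R ^ 2) * h1
  have hann2 : |R ^ 2 - 1 - (|k| * ε) ^ 2| < 2 * (|k| * ε) := by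
    have e : R ^ 2 - 1 - (|k| * ε) ^ 2
        = 2 * k * (k * (x 0 ^ 2 + y 0 ^ 2 - ε ^ 2) / 2 - y 0) := by
      rw [hRR, mul_pow |k|, sq_abs]; ring
    rw [e, abs_mul, abs_mul, abs_two]
    have := mul_lt_mul_of_pos_left hann hkpos
    linarith
  obtain ⟨ha, hb⟩ := abs_lt.mp hann2
  have hd : 0 < |k| * ε := mul_pos hkpos hε
  have hl : 1 - |k| * ε < R := lt_of_pow_lt_pow_left₀ 2 hR (by linarith)
  have hr : R < 1 + |k| * ε := lt_of_pow_lt_pow_left₀ 2 (by linarith) (by linarith)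
  have hfin : (1 - R) ^ 2 < (|k| * ε) ^ 2 := sq_lt_sq' (by linarith) (by linarith)
  rw [mul_pow, sq_abs] at hfin
  have hk2 : 0 < k ^ 2 := by positivity
  have e2 : k ^ 2 * (x t ^ 2 + y t ^ 2) = (1 - R) ^ 2 := by
    have : k * y t = 1 - R := by linarith
    rw [← this]; linear_combination (k * x t) * hu
  rw [← e2] at hfin
  exact lt_of_mul_lt_mul_left hfin hk2.le
end

section
/- Let ε > 0, A > 0, B > 0, k ∈ ℝ, 0 ≤ vl, vh ≥ 0, v ≥ 0, and x, y ∈ ℝ. Suppose (v ≤ vh ∨ (1+|k|·ε)²·(v² − vh²)/(2·B) + ε ≤ max(|x|,|y|)) and (vl ≤ v ∨ (1+|k|·ε)²·(vl² − v²)/(2·A) + ε ≤ max(|x|,|y|)). If Real.sqrt(x² + y²) ≤ ε, then vl ≤ v ≤ vh. (This is the paper's implication from the loop invariant J to the safety postcondition: inside the goal region, the speed limits hold.) -/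
/-- Loop invariant implies safety postcondition: if the braking-distance limit
predicates `Lim(vl, v, A, x, y)` and `Lim(v, vh, B, x, y)` hold, then inside
the goal region of radius `ε` the speed limits hold. -/
theorem invariant_implies_safe
    (ε A B k vl vh v x y : ℝ)
    (hε : 0 < ε) (hA : 0 < A) (hB : 0 < B)
    (hvl : 0 ≤ vl) (hvh : 0 ≤ vh) (hv : 0 ≤ v)
    (hupper : v ≤ vh ∨
      (1 + |k| * ε) ^ 2 * (v ^ 2 - vh ^ 2) / (2 * B) + ε ≤ max |x| |y|)
    (hlower : vl ≤ v ∨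
      (1 + |k| * ε) ^ 2 * (vl ^ 2 - v ^ 2) / (2 * A) + ε ≤ max |x| |y|)
    (hgoal : Real.sqrt (x ^ 2 + y ^ 2) ≤ ε) :
    vl ≤ v ∧ v ≤ vh := by
  have hmax : max |x| |y| ≤ ε := by
    refine le_trans (max_le ?_ ?_) hgoal
    · exact Real.abs_le_sqrt (by nlinarith [sq_nonneg y])
    · exact Real.abs_le_sqrt (by nlinarith [sq_nonneg x])
  have key : ∀ a b C : ℝ, 0 ≤ b → 0 < C →
      (a ≤ b ∨ (1 + |k| * ε) ^ 2 * (a ^ 2 - b ^ 2) / (2 * C) + ε ≤ max |x| |y|) → a ≤ b := by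
    intro a b C hb hC h
    rcases h with h | h
    · exact h
    · by_contra hab
      have hab' : b < a := lt_of_not_ge hab
      have h1 : 0 < a ^ 2 - b ^ 2 := by nlinarith
      have h2 : 0 < (1 + |k| * ε) ^ 2 * (a ^ 2 - b ^ 2) / (2 * C) := by positivity
      linarith
  exact ⟨key vl v A hv hA hlower, key v vh B hvh hB hupper⟩
end

section
/- Let ε > 0, A > 0, B > 0, T > 0, k ∈ ℝ, 0 ≤ vl, and vh with B·T ≤ vh − vl. Let v > vh, and x, y ∈ ℝ with (1+|k|·ε)²·(v² − vh²)/(2·B) + ε ≤ max(|x|,|y|). Then the choice a = −B satisfies the admissibility condition Go, i.e.: −B ≤ a ≤ A; v + a·T ≥ 0; (v ≤ vh ∧ v + a·T ≤ vh) ∨ (1+|k|·ε)²·(v·T + a·T²/2 + ((v + a·T)² − vh²)/(2·B)) + ε ≤ max(|x|,|y|); and (vl ≤ v ∧ vl ≤ v + a·T) ∨ (1+|k|·ε)²·(v·T + a·T²/2 + (vl² − (v + a·T)²)/(2·A)) + ε ≤ max(|x|,|y|). -/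
/-- Liveness controller-satisfiability, too-fast case: if the robot is too
fast (`v > vh`) but has enough distance left to brake to `vh`, then maximal
braking `a = −B` satisfies the admissibility condition `Go`. -/
theorem brake_admissible
    (ε A B T k vl vh v x y : ℝ)
    (hε : 0 < ε) (hA : 0 < A) (hB : 0 < B) (hT : 0 < T)
    (hvl : 0 ≤ vl) (hBT : B * T ≤ vh - vl)
    (hv : vh < v)
    (hdist : (1 + |k| * ε) ^ 2 * (v ^ 2 - vh ^ 2) / (2 * B) + ε ≤ max |x| |y|) :
    let a : ℝ := -B
    (-B ≤ a ∧ a ≤ A) ∧ v + a * T ≥ 0 ∧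
    ((v ≤ vh ∧ v + a * T ≤ vh) ∨
      (1 + |k| * ε) ^ 2 *
        (v * T + a * T ^ 2 / 2 + ((v + a * T) ^ 2 - vh ^ 2) / (2 * B)) + ε
        ≤ max |x| |y|) ∧
    ((vl ≤ v ∧ vl ≤ v + a * T) ∨
      (1 + |k| * ε) ^ 2 *
        (v * T + a * T ^ 2 / 2 + (vl ^ 2 - (v + a * T) ^ 2) / (2 * A)) + ε
        ≤ max |x| |y|) := by
  intro a
  have ha : a = -B := rfl
  have hBT0 : 0 < B * T := mul_pos hB hT
  have haT : a * T = -(B * T) := by rw [ha]; ring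
  have key : v * T + a * T ^ 2 / 2 + ((v + a * T) ^ 2 - vh ^ 2) / (2 * B)
      = (v ^ 2 - vh ^ 2) / (2 * B) := by
    rw [ha]
    field_simp
    ring
  refine ⟨⟨le_of_eq ha.symm, by linarith⟩, by linarith, Or.inr ?_,
    Or.inl ⟨by linarith, by linarith⟩⟩
  rw [key, ← mul_div_assoc]
  exact hdist
end

section
/- Let ε > 0, A > 0, B > 0, T > 0, k ∈ ℝ, 0 ≤ vl, and vh with A·T ≤ vh − vl. Let 0 ≤ v < vl, and x, y ∈ ℝ with (1+|k|·ε)²·(vl² − v²)/(2·A) + ε ≤ max(|x|,|y|). Then the choice a = A satisfies the admissibility condition Go, i.e.: −B ≤ a ≤ A; v + a·T ≥ 0; (v ≤ vh ∧ v + a·T ≤ vh) ∨ (1+|k|·ε)²·(v·T + a·T²/2 + ((v + a·T)² − vh²)/(2·B)) + ε ≤ max(|x|,|y|); and (vl ≤ v ∧ vl ≤ v + a·T) ∨ (1+|k|·ε)²·(v·T + a·T²/2 + (vl² − (v + a·T)²)/(2·A)) + ε ≤ max(|x|,|y|). -/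
/-- Liveness controller-satisfiability, too-slow case: if the robot is too
slow (`v < vl`) but has enough distance left to speed up to `vl`, then maximal
acceleration `a = A` satisfies the admissibility condition `Go`. -/
theorem accelerate_admissible
    (ε A B T k vl vh v x y : ℝ)
    (hε : 0 < ε) (hA : 0 < A) (hB : 0 < B) (hT : 0 < T)
    (hvl : 0 ≤ vl) (hAT : A * T ≤ vh - vl)
    (hv0 : 0 ≤ v) (hv : v < vl)
    (hdist : (1 + |k| * ε) ^ 2 * (vl ^ 2 - v ^ 2) / (2 * A) + ε ≤ max |x| |y|) :
    let a : ℝ := A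
    (-B ≤ a ∧ a ≤ A) ∧ v + a * T ≥ 0 ∧
    ((v ≤ vh ∧ v + a * T ≤ vh) ∨
      (1 + |k| * ε) ^ 2 *
        (v * T + a * T ^ 2 / 2 + ((v + a * T) ^ 2 - vh ^ 2) / (2 * B)) + ε
        ≤ max |x| |y|) ∧
    ((vl ≤ v ∧ vl ≤ v + a * T) ∨
      (1 + |k| * ε) ^ 2 *
        (v * T + a * T ^ 2 / 2 + (vl ^ 2 - (v + a * T) ^ 2) / (2 * A)) + ε
        ≤ max |x| |y|) := by
  intro a
  have hp : 0 < A * T := mul_pos hA hT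
  have e : v * T + A * T ^ 2 / 2 + (vl ^ 2 - (v + A * T) ^ 2) / (2 * A)
      = (vl ^ 2 - v ^ 2) / (2 * A) := by
    field_simp
    ring
  refine ⟨⟨?_, le_refl A⟩, ?_, Or.inl ⟨?_, ?_⟩, Or.inr ?_⟩
  · show -B ≤ A
    linarith
  · show v + A * T ≥ 0
    linarith
  · linarith
  · show v + A * T ≤ vh
    linarith
  · show (1 + |k| * ε) ^ 2 *
        (v * T + A * T ^ 2 / 2 + (vl ^ 2 - (v + A * T) ^ 2) / (2 * A)) + ε
        ≤ max |x| |y|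
    rw [e, ← mul_div_assoc]
    exact hdist
end

section
/- Let k ≠ 0, ε ≥ 0, τ ≥ 0, and let x, y, v : ℝ → ℝ satisfy, for all t ∈ [0, τ], x'(t) = v(t)·(k·y(t) − 1), y'(t) = −v(t)·k·x(t), v(t) ≥ 0, and x(t)² + (y(t) − 1/k)² ≤ (1/|k| + ε)². Then for all t ∈ [0, τ], max(|x(0)|,|y(0)|) − max(|x(t)|,|y(t)|) ≤ (1 + |k|·ε)·∫₀ᵗ v(s) ds; i.e., the sup-norm distance of the waypoint to the origin decreases by at most (1 + |k|·ε) times the arc length traveled. -/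
lemma aux_ftc_bound (C t : ℝ) (ht : 0 ≤ t) (f g v : ℝ → ℝ)
    (hf : ∀ s ∈ Set.Icc (0 : ℝ) t, HasDerivAt f (v s * g s) s)
    (hg : ContinuousOn g (Set.Icc 0 t))
    (hv : ∀ s ∈ Set.Icc (0 : ℝ) t, 0 ≤ v s)
    (hC : ∀ s ∈ Set.Icc (0 : ℝ) t, |g s| ≤ C)
    (hint : IntervalIntegrable v MeasureTheory.volume 0 t) :
    |f t - f 0| ≤ C * ∫ s in (0 : ℝ)..t, v s := by
  have hu : Set.uIcc 0 t = Set.Icc 0 t := Set.uIcc_of_le ht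
  have hi : IntervalIntegrable (fun s => v s * g s) MeasureTheory.volume 0 t :=
    hint.mul_continuousOn (by rwa [hu])
  have h1 := intervalIntegral.integral_eq_sub_of_hasDerivAt (by rwa [hu]) hi
  rw [← h1, ← intervalIntegral.integral_const_mul]
  refine (intervalIntegral.abs_integral_le_integral_abs ht).trans ?_
  refine intervalIntegral.integral_mono_on ht hi.abs (hint.const_mul C) ?_
  intro s hs
  rw [abs_mul, abs_of_nonneg (hv s hs), mul_comm]
  exact mul_le_mul_of_nonneg_right (hC s hs) (hv s hs)

/-- Along solutions of the planar Dubins plant ODE staying in the disc of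
radius `1/|k| + ε` about the rotation center `(0, 1/k)`, the sup-norm distance
of the waypoint to the origin decreases by at most `(1 + |k|·ε)` times the arc
length traveled. -/
theorem supnorm_lipschitz_in_arclength
    (k ε τ : ℝ) (hk : k ≠ 0) (hε : 0 ≤ ε) (hτ : 0 ≤ τ)
    (x y v : ℝ → ℝ)
    (hx : ∀ t ∈ Set.Icc (0 : ℝ) τ, HasDerivAt x (v t * (k * y t - 1)) t)
    (hy : ∀ t ∈ Set.Icc (0 : ℝ) τ, HasDerivAt y (-(v t) * k * x t) t)
    (hv : ∀ t ∈ Set.Icc (0 : ℝ) τ, 0 ≤ v t)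
    (hdisc : ∀ t ∈ Set.Icc (0 : ℝ) τ,
      x t ^ 2 + (y t - 1 / k) ^ 2 ≤ (1 / |k| + ε) ^ 2)
    (hint : IntervalIntegrable v MeasureTheory.volume 0 τ) :
    ∀ t ∈ Set.Icc (0 : ℝ) τ,
      max |x 0| |y 0| - max |x t| |y t|
        ≤ (1 + |k| * ε) * ∫ s in (0 : ℝ)..t, v s := by
  intro t ht
  have hsub : ∀ s ∈ Set.Icc (0 : ℝ) t, s ∈ Set.Icc (0 : ℝ) τ :=
    fun s hs => ⟨hs.1, hs.2.trans ht.2⟩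
  have hk' : 0 < |k| := abs_pos.mpr hk
  have hR : 0 ≤ 1 / |k| + ε := by positivity
  have hkR : |k| * (1 / |k| + ε) = 1 + |k| * ε := by field_simp
  have hint' : IntervalIntegrable v MeasureTheory.volume 0 t := by
    refine hint.mono_set ?_
    rw [Set.uIcc_of_le ht.1, Set.uIcc_of_le hτ]
    exact hsub
  have cx : ContinuousOn x (Set.Icc 0 t) :=
    fun s hs => (hx s (hsub s hs)).continuousAt.continuousWithinAt
  have cy : ContinuousOn y (Set.Icc 0 t) :=
    fun s hs => (hy s (hsub s hs)).continuousAt.continuousWithinAt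
  have hX := aux_ftc_bound (1 + |k| * ε) t ht.1 x (fun s => k * y s - 1) v
    (fun s hs => hx s (hsub s hs)) (by fun_prop) (fun s hs => hv s (hsub s hs))
    (by
      intro s hs
      have e : k * y s - 1 = k * (y s - 1 / k) := by field_simp
      simp only [e]
      rw [abs_mul, ← hkR]
      refine mul_le_mul_of_nonneg_left ?_ hk'.le
      apply abs_le_of_sq_le_sq _ hR
      nlinarith [hdisc s (hsub s hs), sq_nonneg (x s)]) hint'
  have hY := aux_ftc_bound (1 + |k| * ε) t ht.1 y (fun s => -(k * x s)) v
    (fun s hs => by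
      have := hy s (hsub s hs)
      convert this using 1
      ring) (by fun_prop) (fun s hs => hv s (hsub s hs))
    (by
      intro s hs
      simp only [abs_neg]
      rw [abs_mul, ← hkR]
      refine mul_le_mul_of_nonneg_left ?_ hk'.le
      apply abs_le_of_sq_le_sq _ hR
      nlinarith [hdisc s (hsub s hs), sq_nonneg (y s - 1 / k)]) hint'
  have m1 := le_max_left |x t| |y t|
  have m2 := le_max_right |x t| |y t|
  rw [sub_le_iff_le_add]
  apply max_le
  · rw [abs_sub_comm] at hX
    have := abs_sub_abs_le_abs_sub (x 0) (x t)
    linarith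
  · rw [abs_sub_comm] at hY
    have := abs_sub_abs_le_abs_sub (y 0) (y t)
    linarith
end
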